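/- arXiv:2107.10219 — 2 statements merged into one kernel-verified Lean document; each statement's English description precedes it below -/
import Mathlib

section
/- Let f : ℝ → ℝ be continuously differentiable such that for every δ > 0 there exists S > 1 with |deriv f s| ≤ δ · (Real.log |s|)^{1/2} whenever |s| ≥ S. Then for every ε > 0 there exists a constant C_ε > 0 such that for all a, b ∈ ℝ, |f(a) − f(b)| ≤ (Real.sqrt ε · (Real.log (1 + |a| + |b|))^{1/2} + C_ε) · |a − b|. -/
/-! By compactness, a growth bound on the derivative near infinity becomes a global one at the cost
of an additive constant. If the bound is a monotone function of the norm, it can be evaluated at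
`‖a‖ + ‖b‖` along the whole segment from `a` to `b`, where the mean value inequality applies. -/

open Bornology Filter Set

lemma norm_le_norm_add_norm_of_mem_segment
    {E : Type*} [SeminormedAddCommGroup E] [NormedSpace ℝ E] {a b x : E}
    (hx : x ∈ segment ℝ a b) : ‖x‖ ≤ ‖a‖ + ‖b‖ :=
  (convexOn_univ_norm.le_max_of_mem_segment (mem_univ a) (mem_univ b) hx).trans
    (max_le_add_of_nonneg (norm_nonneg a) (norm_nonneg b))

lemma exists_forall_norm_le_add_of_eventually_cocompact
    {X F : Type*} [TopologicalSpace X] [SeminormedAddCommGroup F] {φ : X → F} {g : X → ℝ}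
    (hφ : Continuous φ) (hg : ∀ x, 0 ≤ g x) (hφg : ∀ᶠ x in cocompact X, ‖φ x‖ ≤ g x) :
    ∃ C : ℝ, 0 < C ∧ ∀ x, ‖φ x‖ ≤ g x + C := by
  obtain ⟨K, hK, hφgK⟩ := mem_cocompact.mp hφg
  obtain ⟨M, hM⟩ := hK.exists_bound_of_continuousOn hφ.continuousOn
  refine ⟨max M 1, by positivity, fun x ↦ ?_⟩
  by_cases hx : x ∈ K
  · exact (hM x hx).trans ((le_max_left M 1).trans (le_add_of_nonneg_left (hg x)))
  · exact (hφgK hx).trans (le_add_of_nonneg_right (by positivity))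

lemma monotoneOn_log_one_add_rpow {p : ℝ} (hp : 0 ≤ p) :
    MonotoneOn (fun r : ℝ ↦ Real.log (1 + r) ^ p) (Ici 0) := by
  intro r (hr : 0 ≤ r) s _ hrs
  have hlog : 0 ≤ Real.log (1 + r) := Real.log_nonneg (by linarith)
  dsimp only
  gcongr

section MeanValue

variable {E F : Type*} [NormedAddCommGroup E] [NormedSpace ℝ E]
  [NormedAddCommGroup F] [NormedSpace ℝ F] {f : E → F} {g : ℝ → ℝ}

lemma norm_sub_le_of_norm_fderiv_le_monotoneOn (hf : Differentiable ℝ f)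
    (hg : MonotoneOn g (Ici 0)) (hfg : ∀ x, ‖fderiv ℝ f x‖ ≤ g ‖x‖) (a b : E) :
    ‖f a - f b‖ ≤ g (‖a‖ + ‖b‖) * ‖a - b‖ := by
  have fderiv_le : ∀ x ∈ segment ℝ a b, ‖fderiv ℝ f x‖ ≤ g (‖a‖ + ‖b‖) := fun x hx ↦
    (hfg x).trans (hg (norm_nonneg x) (add_nonneg (norm_nonneg a) (norm_nonneg b))
      (norm_le_norm_add_norm_of_mem_segment hx))
  exact (convex_segment a b).norm_image_sub_le_of_norm_fderiv_le (fun x _ ↦ hf x) fderiv_le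
    (right_mem_segment ℝ a b) (left_mem_segment ℝ a b)

lemma exists_norm_sub_le_of_eventually_norm_fderiv_le [ProperSpace E] (hf : ContDiff ℝ 1 f)
    (hg : MonotoneOn g (Ici 0)) (hg₀ : 0 ≤ g 0)
    (hfg : ∀ᶠ x in cobounded E, ‖fderiv ℝ f x‖ ≤ g ‖x‖) :
    ∃ C : ℝ, 0 < C ∧ ∀ a b, ‖f a - f b‖ ≤ (g (‖a‖ + ‖b‖) + C) * ‖a - b‖ := by
  have g_nonneg (x : E) : 0 ≤ g ‖x‖ :=
    hg₀.trans (hg self_mem_Ici (norm_nonneg x) (norm_nonneg x))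
  rw [Metric.cobounded_eq_cocompact] at hfg
  obtain ⟨C, hC, fderiv_le⟩ := exists_forall_norm_le_add_of_eventually_cocompact
    (hf.continuous_fderiv one_ne_zero) g_nonneg hfg
  exact ⟨C, hC, norm_sub_le_of_norm_fderiv_le_monotoneOn (hf.differentiable one_ne_zero)
    (hg.add_const C) fderiv_le⟩

theorem stmt_10_general [ProperSpace E] (hf : ContDiff ℝ 1 f) {δ p : ℝ} (hδ : 0 ≤ δ) (hp : 0 ≤ p)
    (hfδ : ∀ᶠ x in cobounded E, ‖fderiv ℝ f x‖ ≤ δ * Real.log ‖x‖ ^ p) :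
    ∃ C : ℝ, 0 < C ∧ ∀ a b,
      ‖f a - f b‖ ≤ (δ * Real.log (1 + ‖a‖ + ‖b‖) ^ p + C) * ‖a - b‖ := by
  -- `log (1 + r) ^ p` is monotone and nonnegative on all of `[0, ∞)`; `log r ^ p` need not be.
  have fderiv_le : ∀ᶠ x in cobounded E, ‖fderiv ℝ f x‖ ≤ δ * Real.log (1 + ‖x‖) ^ p := by
    filter_upwards [hfδ, eventually_cobounded_le_norm 1] with x hx hx₁
    have log_nonneg : 0 ≤ Real.log ‖x‖ := Real.log_nonneg hx₁
    refine hx.trans ?_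
    gcongr
    linarith
  simpa only [add_assoc] using exists_norm_sub_le_of_eventually_norm_fderiv_le hf
    (g := fun r ↦ δ * Real.log (1 + r) ^ p)
    (fun r hr s hs hrs ↦ mul_le_mul_of_nonneg_left (monotoneOn_log_one_add_rpow hp hr hs hrs) hδ)
    (mul_nonneg hδ (Real.rpow_nonneg (Real.log_nonneg (by simp)) p)) fderiv_le

end MeanValue

/-- If `f ∈ C¹(ℝ)` and `limsup_{|s|→∞} |f'(s)|/(log|s|)^{1/2} = 0`, then for every `ε > 0`
there is `C_ε > 0` with `|f(a) − f(b)| ≤ (√ε (log(1+|a|+|b|))^{1/2} + C_ε)|a − b|`. -/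
theorem stmt_10 (f : ℝ → ℝ) (hf : ContDiff ℝ 1 f)
    (h : ∀ δ : ℝ, 0 < δ → ∃ S : ℝ, 1 < S ∧
      ∀ s : ℝ, S ≤ |s| → |deriv f s| ≤ δ * (Real.log |s|) ^ ((1 : ℝ) / 2)) :
    ∀ ε : ℝ, 0 < ε → ∃ C : ℝ, 0 < C ∧
      ∀ a b : ℝ,
        |f a - f b| ≤
          (Real.sqrt ε * (Real.log (1 + |a| + |b|)) ^ ((1 : ℝ) / 2) + C) * |a - b| := by
  intro ε hε
  obtain ⟨S, -, deriv_le⟩ := h √ε (Real.sqrt_pos.mpr hε)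
  exact stmt_10_general hf (Real.sqrt_nonneg ε) one_half_pos.le <|
    (eventually_cobounded_le_norm S).mono fun s hs ↦
      norm_deriv_eq_norm_fderiv.symm.trans_le (deriv_le s hs)
end

section
/- Let n ≥ 1, let U be an open subset of EuclideanSpace ℝ (Fin n), let τ ∈ ℝ, let q : EuclideanSpace ℝ (Fin n) × ℝ → ℂ, let η : EuclideanSpace ℝ (Fin n) → ℝ be twice continuously differentiable on U with ∑_{i} (∂_i η(x))² = 1 for all x ∈ U (eikonal equation), and let a : EuclideanSpace ℝ (Fin n) × ℝ → ℂ be twice continuously differentiable. Assume a satisfies the transport equation 2 ∂_t a(x,t) − 2 ∑_i ∂_i η(x) · ∂_i a(x,t) − (∑_i ∂_i∂_i η(x)) · a(x,t) = 0 for all (x,t) ∈ U × ℝ. Then the function v(x,t) = Complex.exp (Complex.I · τ · (η(x) + t)) · a(x,t) satisfies, for all (x,t) ∈ U × ℝ, ∂_t∂_t v − ∑_i ∂_i∂_i v + q·v = Complex.exp (Complex.I · τ · (η(x) + t)) · (∂_t∂_t a − ∑_i ∂_i∂_i a + q·a). -/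
/-- Spatial directional derivative `∂ᵢ` of a complex-valued function of `(x,t)`. -/
noncomputable def pdC {n : ℕ} (i : Fin n) (g : EuclideanSpace ℝ (Fin n) × ℝ → ℂ) :
    EuclideanSpace ℝ (Fin n) × ℝ → ℂ :=
  fun p => fderiv ℝ (fun y => g (y, p.2)) p.1 (EuclideanSpace.single i 1)

/-- Time derivative `∂ₜ` of a complex-valued function of `(x,t)`. -/
noncomputable def tdC {n : ℕ} (g : EuclideanSpace ℝ (Fin n) × ℝ → ℂ) :
    EuclideanSpace ℝ (Fin n) × ℝ → ℂ :=
  fun p => deriv (fun s => g (p.1, s)) p.2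

/-- Spatial directional derivative `∂ᵢ` of a real-valued function of `x`. -/
noncomputable def pdR {n : ℕ} (i : Fin n) (g : EuclideanSpace ℝ (Fin n) → ℝ) :
    EuclideanSpace ℝ (Fin n) → ℝ :=
  fun x => fderiv ℝ g x (EuclideanSpace.single i 1)

/-! In the expansion of `□(e^φ a)` the phase `φ = iτ(η + t)` enters through `φ_t = iτ`,
`∇φ = iτ∇η` and `□φ = -iτΔη`. The terms of first order in `τ` add up to the transport operator
applied to `a`, and those of second order to the eikonal defect `|∇η|² - 1` times `a`. -/

open Complex Filter Topology

section DirectionalDerivatives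

variable {𝕜 F G : Type*} [NontriviallyNormedField 𝕜] [NormedAddCommGroup F] [NormedSpace 𝕜 F]
  [NormedAddCommGroup G] [NormedSpace 𝕜 G] {x : F}

theorem differentiableAt_fderiv_apply {f : F → G} (hf : ContDiffAt 𝕜 2 f x) (e : F) :
    DifferentiableAt 𝕜 (fun y => fderiv 𝕜 f y e) x :=
  ((hf.fderiv_right (m := 1) (by norm_num)).differentiableAt one_ne_zero).clm_apply
    (differentiableAt_const e)

theorem eventually_differentiableAt {f : F → G} (hf : ContDiffAt 𝕜 2 f x) :
    ∀ᶠ y in 𝓝 x, DifferentiableAt 𝕜 f y :=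
  (hf.eventually (by simp)).mono fun _ hy => hy.differentiableAt two_ne_zero

variable [NormedAlgebra 𝕜 ℂ] {φ b : F → ℂ}

theorem fderiv_cexp_mul_apply (hφ : DifferentiableAt 𝕜 φ x) (hb : DifferentiableAt 𝕜 b x)
    (e : F) :
    fderiv 𝕜 (fun y => exp (φ y) * b y) x e
      = exp (φ x) * (fderiv 𝕜 b x e + fderiv 𝕜 φ x e * b x) := by
  rw [(hφ.hasFDerivAt.cexp.fun_mul hb.hasFDerivAt).fderiv]
  simp only [add_apply, smul_apply, smul_eq_mul]
  ring

theorem fderiv_fderiv_cexp_mul_apply (hφ : ContDiffAt 𝕜 2 φ x) (hb : ContDiffAt 𝕜 2 b x)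
    (e : F) :
    fderiv 𝕜 (fun z => fderiv 𝕜 (fun y => exp (φ y) * b y) z e) x e
      = exp (φ x) * (fderiv 𝕜 (fun z => fderiv 𝕜 b z e) x e
          + 2 * fderiv 𝕜 φ x e * fderiv 𝕜 b x e
          + (fderiv 𝕜 (fun z => fderiv 𝕜 φ z e) x e + fderiv 𝕜 φ x e ^ 2) * b x) := by
  have first_order : (fun z => fderiv 𝕜 (fun y => exp (φ y) * b y) z e) =ᶠ[𝓝 x]
      fun z => exp (φ z) * (fderiv 𝕜 b z e + fderiv 𝕜 φ z e * b z) := by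
    filter_upwards [eventually_differentiableAt hφ, eventually_differentiableAt hb]
      with z hφz hbz using fderiv_cexp_mul_apply hφz hbz e
  have dφ := hφ.differentiableAt two_ne_zero
  have db := hb.differentiableAt two_ne_zero
  have dφ' := differentiableAt_fderiv_apply hφ e
  have db' := differentiableAt_fderiv_apply hb e
  rw [first_order.fderiv_eq, fderiv_cexp_mul_apply dφ (db'.fun_add (dφ'.fun_mul db)),
    fderiv_fun_add db' (dφ'.fun_mul db), fderiv_fun_mul dφ' db]
  simp only [add_apply, smul_apply, smul_eq_mul]
  ring

end DirectionalDerivatives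

theorem fderiv_const_mul_ofReal_apply {F : Type*} [NormedAddCommGroup F] [NormedSpace ℝ F]
    {θ : F → ℝ} {x : F} (hθ : DifferentiableAt ℝ θ x) (c : ℂ) (e : F) :
    fderiv ℝ (fun y => c * (θ y : ℂ)) x e = c * (fderiv ℝ θ x e : ℂ) := by
  have h : HasFDerivAt (fun y => (θ y : ℂ)) (ofRealCLM.comp (fderiv ℝ θ x)) x :=
    ofRealCLM.hasFDerivAt.comp x hθ.hasFDerivAt
  simp [(h.const_mul c).fderiv]

section WaveOperator

variable {n : ℕ}

/-- The wave operator `□ = ∂ₜ² - Δ` on complex-valued functions of `(x,t)`, with the sign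
convention in which the wave equation with potential `q` reads `□v + qv = 0`. -/
noncomputable def waveOperator (g : EuclideanSpace ℝ (Fin n) × ℝ → ℂ) :
    EuclideanSpace ℝ (Fin n) × ℝ → ℂ :=
  fun p => tdC (tdC g) p - ∑ i : Fin n, pdC i (pdC i g) p

variable {φ a : EuclideanSpace ℝ (Fin n) × ℝ → ℂ} {p : EuclideanSpace ℝ (Fin n) × ℝ}

theorem pdC_pdC_cexp_mul (hφ : ContDiffAt ℝ 2 φ p) (ha : ContDiffAt ℝ 2 a p) (i : Fin n) :
    pdC i (pdC i fun p => exp (φ p) * a p) p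
      = exp (φ p) * (pdC i (pdC i a) p + 2 * pdC i φ p * pdC i a p
          + (pdC i (pdC i φ) p + pdC i φ p ^ 2) * a p) := by
  have slice : ContDiffAt ℝ 2 (fun y => (y, p.2)) p.1 := contDiffAt_id.prodMk contDiffAt_const
  exact fderiv_fderiv_cexp_mul_apply (hφ.comp p.1 slice) (ha.comp p.1 slice) _

theorem tdC_tdC_cexp_mul (hφ : ContDiffAt ℝ 2 φ p) (ha : ContDiffAt ℝ 2 a p) :
    tdC (tdC fun p => exp (φ p) * a p) p
      = exp (φ p) * (tdC (tdC a) p + 2 * tdC φ p * tdC a p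
          + (tdC (tdC φ) p + tdC φ p ^ 2) * a p) := by
  have slice : ContDiffAt ℝ 2 (fun s => (p.1, s)) p.2 := contDiffAt_const.prodMk contDiffAt_id
  exact fderiv_fderiv_cexp_mul_apply (hφ.comp p.2 slice) (ha.comp p.2 slice) (1 : ℝ)

theorem waveOperator_cexp_mul (hφ : ContDiffAt ℝ 2 φ p) (ha : ContDiffAt ℝ 2 a p) :
    waveOperator (fun p => exp (φ p) * a p) p
      = exp (φ p) * (waveOperator a p
          + 2 * (tdC φ p * tdC a p - ∑ i, pdC i φ p * pdC i a p)
          + (waveOperator φ p + tdC φ p ^ 2 - ∑ i, pdC i φ p ^ 2) * a p) := by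
  simp only [waveOperator, tdC_tdC_cexp_mul hφ ha, pdC_pdC_cexp_mul hφ ha, mul_assoc, add_mul,
    Finset.sum_add_distrib, ← Finset.mul_sum, ← Finset.sum_mul]
  ring

end WaveOperator

section GeometricalOptics

variable {n : ℕ} {η : EuclideanSpace ℝ (Fin n) → ℝ} {x : EuclideanSpace ℝ (Fin n)}

/-- The phase `iτ(η(x) + t)` of a complex geometrical optics solution. The frequency `τ` may be
complex. -/
noncomputable def cgoPhase (τ : ℂ) (η : EuclideanSpace ℝ (Fin n) → ℝ) :
    EuclideanSpace ℝ (Fin n) × ℝ → ℂ :=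
  fun p => I * τ * ((η p.1 : ℂ) + (p.2 : ℂ))

theorem contDiffAt_cgoPhase (hη : ContDiffAt ℝ 2 η x) (τ : ℂ) (t : ℝ) :
    ContDiffAt ℝ 2 (cgoPhase τ η) (x, t) :=
  contDiffAt_const.mul ((ofRealCLM.contDiff.contDiffAt.comp (x, t)
    (hη.comp (x, t) contDiffAt_fst)).add (ofRealCLM.contDiff.contDiffAt.comp (x, t) contDiffAt_snd))

theorem tdC_cgoPhase (τ : ℂ) (η : EuclideanSpace ℝ (Fin n) → ℝ) :
    tdC (cgoPhase τ η) = fun _ => I * τ := by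
  funext p
  have h : HasDerivAt (fun s : ℝ => I * τ * ((η p.1 : ℂ) + (s : ℂ))) (I * τ * 1) p.2 :=
    (ofRealCLM.hasDerivAt.const_add _).const_mul _
  exact h.deriv.trans (mul_one _)

theorem pdC_cgoPhase (hη : DifferentiableAt ℝ η x) (τ : ℂ) (t : ℝ) (i : Fin n) :
    pdC i (cgoPhase τ η) (x, t) = I * τ * (pdR i η x : ℂ) := by
  simp only [pdC, cgoPhase, mul_add, fderiv_add_const, pdR]
  exact fderiv_const_mul_ofReal_apply hη _ _

theorem pdC_pdC_cgoPhase (hη : ContDiffAt ℝ 2 η x) (τ : ℂ) (t : ℝ) (i : Fin n) :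
    pdC i (pdC i (cgoPhase τ η)) (x, t) = I * τ * (pdR i (pdR i η) x : ℂ) := by
  have first_order : (fun y => pdC i (cgoPhase τ η) (y, t)) =ᶠ[𝓝 x]
      fun y => I * τ * (pdR i η y : ℂ) :=
    (eventually_differentiableAt hη).mono fun _ hy => pdC_cgoPhase hy τ t i
  rw [pdC, first_order.fderiv_eq]
  exact fderiv_const_mul_ofReal_apply (differentiableAt_fderiv_apply hη _) _ _

theorem waveOperator_cgoPhase (hη : ContDiffAt ℝ 2 η x) (τ : ℂ) (t : ℝ) :
    waveOperator (cgoPhase τ η) (x, t) = -(I * τ * ↑(∑ i, pdR i (pdR i η) x)) := by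
  have tdC_tdC : tdC (tdC (cgoPhase τ η)) (x, t) = 0 := by
    rw [tdC_cgoPhase]
    exact deriv_const t (I * τ)
  simp only [waveOperator, tdC_tdC, pdC_pdC_cgoPhase hη, ← Finset.mul_sum, ofReal_sum, zero_sub]

variable {a : EuclideanSpace ℝ (Fin n) × ℝ → ℂ} {t : ℝ}

theorem waveOperator_cexp_cgoPhase_mul (hη : ContDiffAt ℝ 2 η x) (ha : ContDiffAt ℝ 2 a (x, t))
    (τ : ℂ) :
    waveOperator (fun p => exp (cgoPhase τ η p) * a p) (x, t)
      = exp (cgoPhase τ η (x, t)) * (waveOperator a (x, t)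
          + I * τ * (2 * tdC a (x, t) - 2 * ∑ i, (pdR i η x : ℂ) * pdC i a (x, t)
              - ↑(∑ i, pdR i (pdR i η) x) * a (x, t))
          + τ ^ 2 * (↑(∑ i, pdR i η x ^ 2) - 1) * a (x, t)) := by
  rw [waveOperator_cexp_mul (contDiffAt_cgoPhase hη τ t) ha, waveOperator_cgoPhase hη, tdC_cgoPhase]
  simp only [pdC_cgoPhase (hη.differentiableAt two_ne_zero), mul_pow, I_sq, mul_assoc,
    ← Finset.mul_sum, ofReal_sum, ofReal_pow]
  ring

theorem stmt_11_general (τ : ℂ) (q : EuclideanSpace ℝ (Fin n) × ℝ → ℂ)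
    (hη : ContDiffAt ℝ 2 η x) (heik : ∑ i, pdR i η x ^ 2 = 1) (ha : ContDiffAt ℝ 2 a (x, t))
    (htrans : 2 * tdC a (x, t) - 2 * ∑ i, (pdR i η x : ℂ) * pdC i a (x, t)
      - ↑(∑ i, pdR i (pdR i η) x) * a (x, t) = 0) :
    waveOperator (fun p => exp (cgoPhase τ η p) * a p) (x, t)
        + q (x, t) * (exp (cgoPhase τ η (x, t)) * a (x, t))
      = exp (cgoPhase τ η (x, t)) * (waveOperator a (x, t) + q (x, t) * a (x, t)) := by
  rw [waveOperator_cexp_cgoPhase_mul hη ha, htrans, heik, ofReal_one]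
  ring

end GeometricalOptics

/-- Conjugation identity for CGO solutions: if `η` solves the eikonal equation `|∇η|² = 1`
on `U` and `a` solves the transport equation `2a_t − 2∇η·∇a − (Δη)a = 0` on `U × ℝ`, then
`v = e^{iτ(η(x)+t)} a` satisfies `v_tt − Δv + qv = e^{iτ(η(x)+t)} (a_tt − Δa + qa)`
on `U × ℝ`. -/
theorem stmt_11 (n : ℕ) (hn : 1 ≤ n) (U : Set (EuclideanSpace ℝ (Fin n))) (hU : IsOpen U)
    (τ : ℝ) (q : EuclideanSpace ℝ (Fin n) × ℝ → ℂ)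
    (η : EuclideanSpace ℝ (Fin n) → ℝ) (hη : ContDiffOn ℝ 2 η U)
    (heik : ∀ x ∈ U, ∑ i : Fin n, (pdR i η x) ^ 2 = 1)
    (a : EuclideanSpace ℝ (Fin n) × ℝ → ℂ) (ha : ContDiff ℝ 2 a)
    (htrans : ∀ x ∈ U, ∀ t : ℝ,
      2 * tdC a (x, t) - 2 * ∑ i : Fin n, (pdR i η x : ℂ) * pdC i a (x, t)
        - (↑(∑ i : Fin n, pdR i (pdR i η) x) : ℂ) * a (x, t) = 0)
    (v : EuclideanSpace ℝ (Fin n) × ℝ → ℂ)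
    (hv : v = fun p => Complex.exp (Complex.I * (τ : ℂ) * ((η p.1 : ℂ) + (p.2 : ℂ))) * a p) :
    ∀ x ∈ U, ∀ t : ℝ,
      tdC (tdC v) (x, t) - (∑ i : Fin n, pdC i (pdC i v) (x, t)) + q (x, t) * v (x, t)
        = Complex.exp (Complex.I * (τ : ℂ) * ((η x : ℂ) + (t : ℂ))) *
            (tdC (tdC a) (x, t) - (∑ i : Fin n, pdC i (pdC i a) (x, t))
              + q (x, t) * a (x, t)) := by
  subst hv
  exact fun x hx t => stmt_11_general τ q (hη.contDiffAt (hU.mem_nhds hx)) (heik x hx)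
    ha.contDiffAt (htrans x hx t)
end
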